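/- The 8×8 integer matrix ĉ₁ defined in the context, viewed as a matrix over ℂ, has eight distinct complex eigenvalues; equivalently, its characteristic polynomial has eight distinct roots in ℂ. -/

import Mathlib

open Matrix Polynomial

noncomputable section

/-- The matrix of quantum multiplication by c₁(−K_Z) on QH*(Z(α₁,α₂,α₁)),
with all quantum parameters set to 1. -/
def c1hat : Matrix (Fin 8) (Fin 8) ℤ :=
  !![0, 2, 2, -2, 0, 0, 3, 4;
     3, -1, 2, 1, 2, 4, 0, 3;
     1, 1, -1, -1, 0, 0, 2, 0;
     2, 0, 1, 0, 2, 2, 0, 0;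
     0, 1, 4, 0, -1, 1, 0, 2;
     0, 2, 0, -1, 1, -1, 0, 0;
     0, 0, 2, 3, 0, 1, 0, 2;
     0, 0, 0, 0, 2, 3, 2, 0]

/-- ĉ₁ viewed as a complex matrix. -/
def c1hatC : Matrix (Fin 8) (Fin 8) ℂ := c1hat.map (fun n => (n : ℂ))

/-!
If `r ^ 2 * t` is the characteristic polynomial of an `n × n` matrix `A` and `s = r * t`, then
`s ^ 2` is a multiple of it, so `s(A)` is nilpotent by Cayley–Hamilton and every
`tr (A ^ i * s(A))` vanishes. When `r` is not a unit, `deg s < n`, so the coefficients of `s` are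
a kernel vector of the Hankel matrix with entries `tr (A ^ (i + j))`, `i, j < n`. Hence a nonzero
Hankel determinant forces the characteristic polynomial to be squarefree. For `ĉ₁` this
determinant is an integer that is already nonzero modulo `3`.
-/

section PowerTraceMatrix

variable {n R : Type*} [Fintype n] [DecidableEq n] [CommRing R]

/-- The `m × m` Hankel matrix with entries `tr (A ^ (i + j))`: the Gram matrix of
`1, A, …, A ^ (m - 1)` for the bilinear form `(B, C) ↦ tr (B * C)`. -/
def powerTraceMatrix (A : Matrix n n R) (m : ℕ) : Matrix (Fin m) (Fin m) R :=
  .of fun i j => (A ^ (i + j : ℕ)).trace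

lemma powerTraceMatrix_map {S : Type*} [CommRing S] (f : R →+* S) (A : Matrix n n R) (m : ℕ) :
    powerTraceMatrix (A.map f) m = (powerTraceMatrix A m).map f := by
  ext i j
  simp only [powerTraceMatrix, of_apply, Matrix.map_apply, AddMonoidHom.map_trace, ← Matrix.map_pow]

lemma det_powerTraceMatrix_map {S : Type*} [CommRing S] (f : R →+* S) (A : Matrix n n R) (m : ℕ) :
    (powerTraceMatrix (A.map f) m).det = f (powerTraceMatrix A m).det := by
  rw [powerTraceMatrix_map, RingHom.map_det, RingHom.mapMatrix_apply]

lemma powerTraceMatrix_mulVec_coeff (A : Matrix n n R) {m : ℕ} {q : R[X]}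
    (hq : q.natDegree < m) (i : Fin m) :
    (powerTraceMatrix A m *ᵥ fun j => q.coeff j) i = (A ^ (i : ℕ) * aeval A q).trace := by
  rw [aeval_eq_sum_range' hq, ← Fin.sum_univ_eq_sum_range (fun j => q.coeff j • A ^ j)]
  simp only [mulVec, dotProduct, powerTraceMatrix, of_apply, Finset.mul_sum, mul_smul_comm,
    ← pow_add, trace_sum, trace_smul, smul_eq_mul, mul_comm]

lemma trace_pow_mul_aeval_eq_zero [IsReduced R] {A : Matrix n n R} {q : R[X]}
    (hq : IsNilpotent (aeval A q)) (k : ℕ) : (A ^ k * aeval A q).trace = 0 := by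
  have hcomm : Commute (A ^ k) (aeval A q) := by
    simpa only [map_pow, aeval_X] using (Commute.all (X ^ k) q).map (aeval A)
  exact (isNilpotent_trace_of_isNilpotent (hcomm.isNilpotent_mul_left hq)).eq_zero

variable [IsDomain R]

lemma eq_zero_of_isNilpotent_aeval {A : Matrix n n R} {m : ℕ}
    (hdet : (powerTraceMatrix A m).det ≠ 0) {q : R[X]} (hdeg : q.natDegree < m)
    (hq : IsNilpotent (aeval A q)) : q = 0 := by
  have hcoeff : (fun j : Fin m => q.coeff j) = 0 := by
    refine eq_zero_of_mulVec_eq_zero hdet (funext fun i => ?_)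
    rw [powerTraceMatrix_mulVec_coeff A hdeg, trace_pow_mul_aeval_eq_zero hq, Pi.zero_apply]
  exact leadingCoeff_eq_zero.mp (congrFun hcoeff ⟨q.natDegree, hdeg⟩)

theorem squarefree_charpoly_of_det_powerTraceMatrix_ne_zero {A : Matrix n n R}
    (hdet : (powerTraceMatrix A (Fintype.card n)).det ≠ 0) : Squarefree A.charpoly := by
  rintro r ⟨t, hrt⟩
  by_contra hunit
  have hfactor : A.charpoly = r * (r * t) := by rw [hrt, mul_assoc]
  obtain ⟨hr, hs⟩ : r ≠ 0 ∧ r * t ≠ 0 := mul_ne_zero_iff.mp (hfactor ▸ A.charpoly_monic.ne_zero)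
  have hdeg : (r * t).natDegree < Fintype.card n := by
    have hpos : 0 < r.natDegree :=
      natDegree_pos_of_not_isUnit_of_dvd_monic A.charpoly_monic hunit ⟨r * t, hfactor⟩
    rw [← A.charpoly_natDegree_eq_dim, hfactor, natDegree_mul hr hs]
    exact Nat.lt_add_of_pos_left hpos
  have hnil : IsNilpotent (aeval A (r * t)) := by
    have hsq : (r * t) ^ 2 = A.charpoly * t := by rw [hrt]; ring
    exact ⟨2, by rw [← map_pow, hsq, map_mul, aeval_self_charpoly, zero_mul]⟩
  exact hs (eq_zero_of_isNilpotent_aeval hdet hdeg hnil)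

end PowerTraceMatrix

lemma card_toFinset_roots_of_squarefree {K : Type*} [Field K] [PerfectField K] [DecidableEq K]
    {f : K[X]} (hf : Squarefree f) (hsplits : f.Splits) : f.roots.toFinset.card = f.natDegree := by
  have hnodup : f.roots.Nodup := nodup_roots (PerfectField.separable_iff_squarefree.mpr hf)
  rw [Multiset.toFinset_card_of_nodup hnodup, hsplits.natDegree_eq_card_roots]

lemma isUnit_det_powerTraceMatrix_c1hat_mod_three :
    IsUnit (powerTraceMatrix (c1hat.map (Int.castRingHom (ZMod 3))) 8).det := by
  refine isUnit_det_of_right_inverse (B :=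
    !![1, 1, 1, -1, 1, -1, -1, -1;
       1, -1, -1, 0, 1, -1, -1, 1;
       1, -1, -1, 1, 0, 0, -1, -1;
       -1, 0, 1, -1, -1, -1, -1, 1;
       1, 1, 0, -1, 1, 1, 0, 1;
       -1, -1, 0, -1, 1, -1, 0, 0;
       -1, -1, -1, -1, 0, 0, 0, -1;
       -1, 1, -1, 1, 1, 0, -1, -1]) ?_
  decide +kernel

lemma det_powerTraceMatrix_c1hat_ne_zero : (powerTraceMatrix c1hat 8).det ≠ 0 := by
  intro hdet
  have hunit := isUnit_det_powerTraceMatrix_c1hat_mod_three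
  rw [det_powerTraceMatrix_map, hdet, map_zero] at hunit
  exact not_isUnit_zero hunit

/-- ĉ₁ has eight distinct complex eigenvalues: its characteristic polynomial
has eight distinct roots in ℂ. -/
theorem stmt_9 : c1hatC.charpoly.roots.toFinset.card = 8 := by
  have hdet : (powerTraceMatrix c1hatC 8).det ≠ 0 := by
    change (powerTraceMatrix (c1hat.map (Int.castRingHom ℂ)) 8).det ≠ 0
    rw [det_powerTraceMatrix_map]
    exact (map_ne_zero_iff _ (Int.castRingHom ℂ).injective_int).mpr
      det_powerTraceMatrix_c1hat_ne_zero
  have hsq : Squarefree c1hatC.charpoly :=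
    squarefree_charpoly_of_det_powerTraceMatrix_ne_zero (by rwa [Fintype.card_fin])
  rw [card_toFinset_roots_of_squarefree hsq (IsAlgClosed.splits _), charpoly_natDegree_eq_dim,
    Fintype.card_fin]
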